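/- arXiv:2602.02205 — 2 statements merged into one kernel-verified Lean document; each statement's English description precedes it below -/
import Mathlib

section
/- The extended internal energy function η : ℝ × ℝ → [0,∞] defined by η(ρ,S) = c_v · ρ^γ · exp(S/(c_v ρ)) if ρ > 0, η(ρ,S) = 0 if ρ = 0 and S ≤ 0, and η(ρ,S) = +∞ otherwise, is a convex function on ℝ². -/
/-!
With the specific entropy `σ = S / ρ` and the temperature `T = ∂η/∂S`, the energy at density
`ρ > 0` is `ρ T / (γ - 1)`. It is the supremum of the positive parts of its tangent planes, hence
convex. For `ρ > 0` the tangent at the point itself attains the value, and no tangent exceeds it,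
by `1 + x ≤ exp x` and `1 - x⁻¹ ≤ log x`. On the half-line `ρ = 0`, `S ≤ 0` every tangent is
nonpositive. At any other point with `ρ ≤ 0` the tangents are unbounded as `σ → ∞`, since `T` grows
exponentially in `σ`; this is where the value `+∞` comes from.
-/

open scoped ENNReal

/-- The extended internal energy `η(ρ, S)` for a polytropic gas with adiabatic exponent `γ`,
where `c_v = 1/(γ-1)`; values in `[0, ∞]`. -/
noncomputable def internalEnergy (γ : ℝ) (p : ℝ × ℝ) : ℝ≥0∞ :=
  if 0 < p.1 then
    ENNReal.ofReal ((1 / (γ - 1)) * p.1 ^ γ * Real.exp (p.2 / ((1 / (γ - 1)) * p.1)))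
  else if p.1 = 0 ∧ p.2 ≤ 0 then 0
  else ⊤

open Filter
open scoped NNReal

theorem convexOn_iSup {𝕜 E β : Type*} {ι : Sort*} [Semiring 𝕜] [PartialOrder 𝕜]
    [AddCommMonoid E] [SMul 𝕜 E] [AddCommMonoid β] [CompleteLattice β] [IsOrderedAddMonoid β]
    [SMul 𝕜 β] [PosSMulMono 𝕜 β] {s : Set E} {f : ι → E → β} (hs : Convex 𝕜 s)
    (hf : ∀ i, ConvexOn 𝕜 s (f i)) : ConvexOn 𝕜 s fun x ↦ ⨆ i, f i x := by
  refine ⟨hs, fun x hx y hy a b ha hb hab ↦ iSup_le fun i ↦ ?_⟩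
  calc f i (a • x + b • y) ≤ a • f i x + b • f i y := (hf i).2 hx hy ha hb hab
    _ ≤ a • (⨆ j, f j x) + b • ⨆ j, f j y := by
      gcongr
      exacts [le_iSup (f · x) i, le_iSup (f · y) i]

theorem convexOn_ennreal_ofReal_comp {E : Type*} [AddCommMonoid E] [Module ℝ E] {s : Set E}
    {f : E → ℝ} (hf : ConvexOn ℝ s f) : ConvexOn ℝ≥0 s fun x ↦ ENNReal.ofReal (f x) := by
  refine ⟨fun x hx y hy a b ha hb hab ↦ hf.1 hx hy ha hb (mod_cast hab),
    fun x hx y hy a b ha hb hab ↦ ?_⟩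
  calc ENNReal.ofReal (f (a • x + b • y))
      ≤ ENNReal.ofReal (a * f x + b * f y) :=
        ENNReal.ofReal_le_ofReal (hf.2 hx hy ha hb (mod_cast hab))
    _ ≤ ENNReal.ofReal (a * f x) + ENNReal.ofReal (b * f y) := ENNReal.ofReal_add_le
    _ = a • ENNReal.ofReal (f x) + b • ENNReal.ofReal (f y) := by
      simp only [ENNReal.ofReal_mul a.coe_nonneg, ENNReal.ofReal_mul b.coe_nonneg,
        ENNReal.ofReal_coe_nnreal, ENNReal.smul_def, smul_eq_mul]

theorem iSup_ofReal_eq_top_of_tendsto {ι : Type*} {l : Filter ι} [l.NeBot] {f : ι → ℝ}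
    (hf : Tendsto f l atTop) : ⨆ i, ENNReal.ofReal (f i) = ⊤ :=
  top_unique <| le_of_tendsto' (ENNReal.tendsto_ofReal_atTop.comp hf) fun i ↦
    le_iSup (fun i ↦ ENNReal.ofReal (f i)) i

theorem sub_le_mul_log_div {x y : ℝ} (hx : 0 < x) (hy : 0 < y) :
    x - y ≤ x * Real.log (x / y) := by
  calc x - y = x * (1 - (x / y)⁻¹) := by field_simp
    _ ≤ x * Real.log (x / y) := by
      gcongr
      exact Real.one_sub_inv_le_log_of_pos (div_pos hx hy)

theorem exp_mul_one_add_sub_le_exp (x y : ℝ) : Real.exp x * (1 + (y - x)) ≤ Real.exp y := by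
  calc Real.exp x * (1 + (y - x)) ≤ Real.exp x * Real.exp (y - x) := by
        gcongr
        linarith [Real.add_one_le_exp (y - x)]
    _ = Real.exp y := by rw [← Real.exp_add, add_sub_cancel]

/-- The temperature `ρ ^ (γ - 1) * exp ((γ - 1) * σ)` of the gas at density `ρ > 0` and specific
entropy `σ`, written as a single exponential. -/
noncomputable def temperature (γ ρ σ : ℝ) : ℝ :=
  Real.exp ((γ - 1) * (σ + Real.log ρ))

/-- The tangent plane of the internal energy at density `ρ > 0` and entropy `S = ρ * σ`, as a
function of `p`. Its slope in the entropy is the temperature, and minus its constant term is the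
pressure. -/
noncomputable def energyTangent (γ ρ σ : ℝ) (p : ℝ × ℝ) : ℝ :=
  temperature γ ρ σ * (p.2 + (γ / (γ - 1) - σ) * p.1 - ρ)

section InternalEnergy

variable {γ ρ σ : ℝ} {p : ℝ × ℝ}

theorem internalEnergy_of_fst_pos (hγ : γ ≠ 1) (hp : 0 < p.1) :
    internalEnergy γ p =
      ENNReal.ofReal (p.1 * temperature γ p.1 (p.2 / p.1) / (γ - 1)) := by
  have hk : γ - 1 ≠ 0 := sub_ne_zero.2 hγ
  have hrpow : p.1 ^ γ = p.1 * Real.exp ((γ - 1) * Real.log p.1) := by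
    rw [mul_comm (γ - 1), ← Real.rpow_def_of_pos hp, Real.rpow_sub_one hp.ne',
      mul_div_cancel₀ _ hp.ne']
  have hexp : p.2 / (1 / (γ - 1) * p.1) = (γ - 1) * (p.2 / p.1) := by field_simp
  rw [internalEnergy, if_pos hp, hrpow, hexp, temperature, mul_add, Real.exp_add]
  ring_nf

theorem internalEnergy_of_fst_eq_zero (hp : p.1 = 0) (hp' : p.2 ≤ 0) :
    internalEnergy γ p = 0 := by
  simp [internalEnergy, hp, hp']

theorem energyTangent_self (hγ : γ ≠ 1) (hp : p.1 ≠ 0) :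
    energyTangent γ p.1 (p.2 / p.1) p = p.1 * temperature γ p.1 (p.2 / p.1) / (γ - 1) := by
  have hk : γ - 1 ≠ 0 := sub_ne_zero.2 hγ
  rw [energyTangent]
  field_simp
  ring

theorem energyTangent_le_of_fst_pos (hγ : 1 < γ) (hρ : 0 < ρ) (hp : 0 < p.1) :
    energyTangent γ ρ σ p ≤ p.1 * temperature γ p.1 (p.2 / p.1) / (γ - 1) := by
  have hk : 0 < γ - 1 := sub_pos.2 hγ
  set u := (γ - 1) * (σ + Real.log ρ) with hu
  set v := (γ - 1) * (p.2 / p.1 + Real.log p.1) with hv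
  have hlin : p.2 + (γ / (γ - 1) - σ) * p.1 + p.1 * Real.log (p.1 / ρ) - p.1 =
      p.1 / (γ - 1) * (1 + (v - u)) := by
    rw [Real.log_div hp.ne' hρ.ne', hu, hv]
    field_simp
    ring
  calc energyTangent γ ρ σ p
      = Real.exp u * (p.2 + (γ / (γ - 1) - σ) * p.1 - ρ) := rfl
    _ ≤ Real.exp u * (p.2 + (γ / (γ - 1) - σ) * p.1 + p.1 * Real.log (p.1 / ρ) - p.1) := by
      refine mul_le_mul_of_nonneg_left ?_ (Real.exp_nonneg u)
      linarith [sub_le_mul_log_div hp hρ]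
    _ = p.1 / (γ - 1) * (Real.exp u * (1 + (v - u))) := by
      rw [hlin]
      ring
    _ ≤ p.1 / (γ - 1) * Real.exp v := by
      gcongr
      exact exp_mul_one_add_sub_le_exp u v
    _ = p.1 * temperature γ p.1 (p.2 / p.1) / (γ - 1) := div_mul_eq_mul_div ..

theorem energyTangent_nonpos_of_fst_eq_zero (hρ : 0 ≤ ρ) (hp : p.1 = 0) (hp' : p.2 ≤ 0) :
    energyTangent γ ρ σ p ≤ 0 := by
  refine mul_nonpos_of_nonneg_of_nonpos (Real.exp_nonneg _) ?_
  rw [hp]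
  linarith

theorem ofReal_energyTangent_le_internalEnergy (hγ : 1 < γ) (hρ : 0 < ρ) :
    ENNReal.ofReal (energyTangent γ ρ σ p) ≤ internalEnergy γ p := by
  by_cases hpos : 0 < p.1
  · rw [internalEnergy_of_fst_pos hγ.ne' hpos]
    exact ENNReal.ofReal_le_ofReal (energyTangent_le_of_fst_pos hγ hρ hpos)
  by_cases hzero : p.1 = 0 ∧ p.2 ≤ 0
  · rw [ENNReal.ofReal_of_nonpos (energyTangent_nonpos_of_fst_eq_zero hρ.le hzero.1 hzero.2)]
    exact zero_le
  · simp [internalEnergy, hpos, hzero]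

theorem tendsto_temperature_atTop (hγ : 1 < γ) : Tendsto (temperature γ ρ) atTop atTop :=
  Real.tendsto_exp_atTop.comp <|
    (tendsto_atTop_add_const_right _ _ tendsto_id).const_mul_atTop (sub_pos.2 hγ)

theorem tendsto_energyTangent_atTop_of_fst_neg (hγ : 1 < γ) (hp : p.1 < 0) :
    Tendsto (energyTangent γ ρ · p) atTop atTop := by
  refine (tendsto_temperature_atTop hγ).atTop_mul_atTop₀ ?_
  refine tendsto_atTop_add_const_right _ (-ρ) (tendsto_atTop_add_const_left _ p.2 ?_)
  exact (tendsto_atBot_add_const_left _ _ tendsto_neg_atTop_atBot).atBot_mul_const_of_neg hp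

theorem tendsto_energyTangent_atTop_of_fst_eq_zero (hγ : 1 < γ) (hp : p.1 = 0) (hρ : ρ < p.2) :
    Tendsto (energyTangent γ ρ · p) atTop atTop := by
  simpa [energyTangent, hp] using
    (tendsto_temperature_atTop (ρ := ρ) hγ).atTop_mul_const (sub_pos.2 hρ)

theorem exists_tendsto_energyTangent_atTop (hγ : 1 < γ) (hp : p.1 ≤ 0)
    (hp' : p.1 = 0 → 0 < p.2) :
    ∃ ρ, 0 < ρ ∧ Tendsto (energyTangent γ ρ · p) atTop atTop := by
  rcases hp.lt_or_eq with hneg | hzero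
  · exact ⟨1, one_pos, tendsto_energyTangent_atTop_of_fst_neg hγ hneg⟩
  · obtain ⟨ρ, hρ, hρp⟩ := exists_between (hp' hzero)
    exact ⟨ρ, hρ, tendsto_energyTangent_atTop_of_fst_eq_zero hγ hzero hρp⟩

theorem internalEnergy_eq_iSup_ofReal_energyTangent (hγ : 1 < γ) (p : ℝ × ℝ) :
    internalEnergy γ p =
      ⨆ (ρ : Set.Ioi (0 : ℝ)) (σ : ℝ), ENNReal.ofReal (energyTangent γ ρ σ p) := by
  refine le_antisymm ?_ (iSup₂_le fun ρ σ ↦ ofReal_energyTangent_le_internalEnergy hγ ρ.2)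
  by_cases hpos : 0 < p.1
  · rw [internalEnergy_of_fst_pos hγ.ne' hpos, ← energyTangent_self hγ.ne' hpos.ne']
    exact le_iSup₂_of_le ⟨p.1, hpos⟩ (p.2 / p.1) le_rfl
  by_cases hzero : p.1 = 0 ∧ p.2 ≤ 0
  · simp [internalEnergy_of_fst_eq_zero hzero.1 hzero.2]
  · obtain ⟨ρ, hρ, htop⟩ := exists_tendsto_energyTangent_atTop hγ (not_lt.1 hpos) fun h ↦
      not_le.1 fun h' ↦ hzero ⟨h, h'⟩
    exact le_iSup_of_le ⟨ρ, hρ⟩ (le_top.trans_eq (iSup_ofReal_eq_top_of_tendsto htop).symm)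

theorem convexOn_energyTangent : ConvexOn ℝ Set.univ (energyTangent γ ρ σ) := by
  refine ⟨convex_univ, fun x _ y _ a b _ _ hab ↦ le_of_eq ?_⟩
  simp only [energyTangent, Prod.fst_add, Prod.snd_add, Prod.smul_fst, Prod.smul_snd, smul_eq_mul]
  linear_combination temperature γ ρ σ * ρ * hab

theorem convexOn_internalEnergy (hγ : 1 < γ) : ConvexOn ℝ≥0 Set.univ (internalEnergy γ) := by
  rw [funext (internalEnergy_eq_iSup_ofReal_energyTangent hγ)]
  exact convexOn_iSup convex_univ fun _ ↦ convexOn_iSup convex_univ fun _ ↦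
    convexOn_ennreal_ofReal_comp convexOn_energyTangent

end InternalEnergy

/-- the extended internal energy is convex on `ℝ²`,
with the convex-combination structure of `[0,∞]`. -/
theorem internalEnergy_convex (γ : ℝ) (hγ : 1 < γ) :
    ∀ x y : ℝ × ℝ, ∀ a : ℝ, 0 ≤ a → a ≤ 1 →
      internalEnergy γ (a • x + (1 - a) • y) ≤
        ENNReal.ofReal a * internalEnergy γ x + ENNReal.ofReal (1 - a) * internalEnergy γ y := by
  intro x y a ha ha'
  have hb : 0 ≤ 1 - a := sub_nonneg.2 ha'
  rw [ENNReal.ofReal_eq_coe_nnreal ha, ENNReal.ofReal_eq_coe_nnreal hb]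
  have hab : (⟨a, ha⟩ : ℝ≥0) + ⟨1 - a, hb⟩ = 1 := NNReal.eq (add_sub_cancel a 1)
  exact (convexOn_internalEnergy hγ).2 (Set.mem_univ x) (Set.mem_univ y) zero_le zero_le hab
end

section
/- The total energy is strictly convex on the interior of its domain: for the function F(ρ,m,S) = |m|²/(2ρ) + c_v · ρ^γ · exp(S/(c_v ρ)) defined on {(ρ,m,S) ∈ ℝ × ℝ^d × ℝ : ρ > 0}, and for any two distinct points (ρ₁,m₁,S₁) ≠ (ρ₂,m₂,S₂) with ρ₁ > 0 and ρ₂ > 0 and any λ ∈ (0,1), one has F(λ(ρ₁,m₁,S₁) + (1−λ)(ρ₂,m₂,S₂)) < λ F(ρ₁,m₁,S₁) + (1−λ) F(ρ₂,m₂,S₂). -/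
/-!
The energy per unit mass is
`e(v, u, s) = ‖u‖² / 2 + c v^(1 - γ) exp (s / c)` as a function of the specific volume `v = 1 / ρ`,
the velocity `u = m / ρ` and the specific entropy `s = S / ρ`, and `F(ρ, m, S) = ρ e(v, u, s)`.
The specific state of a mixture is the mass-weighted average of the specific states of its
components, so strict convexity passes from `e` to `F`, distinct states `(ρ, m, S)` having distinct
specific states. Finally `e` is a sum of a strictly convex function of `u` and of
`exp (s / c - (γ - 1) log v)`, where the exponent is convex in `(v, s)` and two distinct points at
which it takes the same value have different `v`, along which `-log` is strictly convex.
-/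

/-- The total energy `F(ρ, m, S) = |m|²/(2ρ) + c_v ρ^γ exp(S/(c_v ρ))`, `c_v = 1/(γ-1)`,
as a real-valued function (intended for `ρ > 0`). -/
noncomputable def totalEnergyFn (d : ℕ) (γ : ℝ) (p : ℝ × EuclideanSpace ℝ (Fin d) × ℝ) : ℝ :=
  ‖p.2.1‖ ^ 2 / (2 * p.1) +
    (1 / (γ - 1)) * p.1 ^ γ * Real.exp (p.2.2 / ((1 / (γ - 1)) * p.1))

open Set

section ConvexFunctions

variable {𝕜 E F G α β : Type*} [CommSemiring 𝕜] [PartialOrder 𝕜]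
  [AddCommMonoid E] [Module 𝕜 E] [AddCommMonoid F] [Module 𝕜 F] [AddCommMonoid G] [Module 𝕜 G]
  [AddCommMonoid α] [PartialOrder α] [Module 𝕜 α]
  [AddCommMonoid β] [PartialOrder β] [Module 𝕜 β]

lemma strictConvexOn_const_smul [PosSMulStrictMono 𝕜 α] {s : Set E} {f : E → α} {c : 𝕜}
    (hc : 0 < c) (hf : StrictConvexOn 𝕜 s f) : StrictConvexOn 𝕜 s fun x ↦ c • f x := by
  refine ⟨hf.1, fun x hx y hy hxy a b ha hb hab ↦ ?_⟩
  calc c • f (a • x + b • y)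
    _ < c • (a • f x + b • f y) := smul_lt_smul_of_pos_left (hf.2 hx hy hxy ha hb hab) hc
    _ = a • c • f x + b • c • f y := by rw [smul_add, smul_comm c a, smul_comm c b]

lemma strictConvexOn_comp_add_comp [IsOrderedCancelAddMonoid α] {s : Set E} {t : Set F}
    {f : E → α} {g : F → α} (hf : StrictConvexOn 𝕜 s f) (hg : StrictConvexOn 𝕜 t g)
    {A : G →ₗ[𝕜] E} {B : G →ₗ[𝕜] F} (hAB : Function.Injective (A.prod B)) :
    StrictConvexOn 𝕜 (A ⁻¹' s ∩ B ⁻¹' t) fun x ↦ f (A x) + g (B x) := by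
  refine ⟨(hf.1.linear_preimage A).inter (hg.1.linear_preimage B),
    fun x hx y hy hxy a b ha hb hab ↦ ?_⟩
  have hne : A x ≠ A y ∨ B x ≠ B y := by
    by_contra! h
    exact hxy (hAB (Prod.ext h.1 h.2))
  have hfle := hf.convexOn.2 hx.1 hy.1 ha.le hb.le hab
  have hgle := hg.convexOn.2 hx.2 hy.2 ha.le hb.le hab
  have hlt : f (a • A x + b • A y) + g (a • B x + b • B y) <
      a • f (A x) + b • f (A y) + (a • g (B x) + b • g (B y)) := by
    rcases hne with hA | hB
    · exact add_lt_add_of_lt_of_le (hf.2 hx.1 hy.1 hA ha hb hab) hgle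
    · exact add_lt_add_of_le_of_lt hfle (hg.2 hx.2 hy.2 hB ha hb hab)
  simpa only [map_add, map_smul, smul_add, add_add_add_comm] using hlt

lemma strictConvexOn_comp_of_lt_of_eq {s : Set E} {t : Set β} {f : E → β} {g : β → α}
    (hg : StrictConvexOn 𝕜 t g) (hg_mono : StrictMonoOn g t) (hf : ConvexOn 𝕜 s f)
    (hst : MapsTo f s t)
    (hf_lt : ∀ ⦃x⦄, x ∈ s → ∀ ⦃y⦄, y ∈ s → x ≠ y → f x = f y → ∀ ⦃a b : 𝕜⦄, 0 < a → 0 < b →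
      a + b = 1 → f (a • x + b • y) < a • f x + b • f y) :
    StrictConvexOn 𝕜 s fun x ↦ g (f x) := by
  refine ⟨hf.1, fun x hx y hy hxy a b ha hb hab ↦ ?_⟩
  have hmem : f (a • x + b • y) ∈ t := hst (hf.1 hx hy ha.le hb.le hab)
  have hmem' : a • f x + b • f y ∈ t := hg.1 (hst hx) (hst hy) ha.le hb.le hab
  by_cases heq : f x = f y
  · exact (hg_mono hmem hmem' (hf_lt hx hy hxy heq ha hb hab)).trans_le
      (hg.convexOn.2 (hst hx) (hst hy) ha.le hb.le hab)
  · exact (hg_mono.monotoneOn hmem hmem' (hf.2 hx hy ha.le hb.le hab)).trans_lt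
      (hg.2 (hst hx) (hst hy) heq ha hb hab)

end ConvexFunctions

section SpecificState

variable {𝕜 E α : Type*} [Field 𝕜] [AddCommGroup E] [Module 𝕜 E]

/-- The state per unit mass `(1 / ρ, x / ρ)` of a system with mass density `ρ` and further
densities `x`. Only meaningful for `ρ ≠ 0`. -/
def specificState (p : 𝕜 × E) : 𝕜 × E := p.1⁻¹ • (1, p.2)

lemma specificState_injOn : InjOn (specificState (𝕜 := 𝕜) (E := E)) {p | p.1 ≠ 0} := by
  rintro ⟨r, x⟩ (hr : r ≠ 0) ⟨s, y⟩ - h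
  simp only [specificState, Prod.smul_mk, smul_eq_mul, mul_one, Prod.mk.injEq, inv_inj] at h
  obtain ⟨rfl, hxy⟩ := h
  rw [smul_right_injective E (inv_ne_zero hr) hxy]

lemma specificState_combo {p q : 𝕜 × E} {a b : 𝕜} (hp : p.1 ≠ 0) (hq : q.1 ≠ 0)
    (hab : a + b = 1) :
    specificState (a • p + b • q) =
      (a * p.1 / (a • p + b • q).1) • specificState p +
        (b * q.1 / (a • p + b • q).1) • specificState q := by
  have hcancel {c r : 𝕜} (hr : r ≠ 0) (d : 𝕜) : c * r / d * r⁻¹ = d⁻¹ * c := by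
    field_simp
  simp only [specificState, smul_smul, hcancel hp, hcancel hq]
  rw [mul_smul, mul_smul, ← smul_add]
  simp only [Prod.smul_mk, Prod.mk_add_mk, smul_eq_mul, mul_one, hab, Prod.snd_add, Prod.smul_snd]

lemma strictConvexOn_smul_comp_specificState [LinearOrder 𝕜] [IsStrictOrderedRing 𝕜]
    [AddCommGroup α] [PartialOrder α] [Module 𝕜 α] [PosSMulStrictMono 𝕜 α] {C : Set (𝕜 × E)}
    {f : 𝕜 × E → α} (hf : StrictConvexOn 𝕜 C f) :
    StrictConvexOn 𝕜 {p | 0 < p.1 ∧ specificState p ∈ C}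
      fun p ↦ p.1 • f (specificState p) := by
  have hpos {p q : 𝕜 × E} {a b : 𝕜} (hp : 0 < p.1) (hq : 0 < q.1) (ha : 0 ≤ a) (hb : 0 ≤ b)
      (hab : a + b = 1) : 0 < (a • p + b • q).1 :=
    convex_Ioi (0 : 𝕜) hp hq ha hb hab
  have hweights {p q : 𝕜 × E} {a b : 𝕜} (h : 0 < (a • p + b • q).1) :
      a * p.1 / (a • p + b • q).1 + b * q.1 / (a • p + b • q).1 = 1 := by
    rw [← add_div]
    exact div_self h.ne'
  refine ⟨?_, ?_⟩
  · rintro p ⟨hp, hpC⟩ q ⟨hq, hqC⟩ a b ha hb hab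
    have hr := hpos hp hq ha hb hab
    refine ⟨hr, ?_⟩
    rw [specificState_combo hp.ne' hq.ne' hab]
    exact hf.1 hpC hqC (by positivity) (by positivity) (hweights hr)
  · rintro p ⟨hp, hpC⟩ q ⟨hq, hqC⟩ hpq a b ha hb hab
    have hr := hpos hp hq ha.le hb.le hab
    have hlt := hf.2 hpC hqC (specificState_injOn.ne hp.ne' hq.ne' hpq) (by positivity)
      (by positivity) (hweights hr)
    rw [← specificState_combo hp.ne' hq.ne' hab] at hlt
    have := smul_lt_smul_of_pos_left hlt hr
    rwa [smul_add, smul_smul, smul_smul, mul_div_cancel₀ _ hr.ne', mul_div_cancel₀ _ hr.ne',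
      mul_smul, mul_smul] at this

end SpecificState

section Energy

lemma strictConvexOn_norm_sq {E : Type*} [NormedAddCommGroup E] [NormedSpace ℝ E]
    [StrictConvexSpace ℝ E] : StrictConvexOn ℝ univ fun x : E ↦ ‖x‖ ^ 2 := by
  refine strictConvexOn_comp_of_lt_of_eq (strictConvexOn_pow le_rfl)
    (pow_left_strictMonoOn₀ two_ne_zero) convexOn_univ_norm (fun x _ ↦ norm_nonneg x)
    fun x _ y _ hxy heq a b ha hb hab ↦ ?_
  rw [← heq, ← add_smul, hab, one_smul]
  exact norm_combo_lt_of_ne le_rfl heq.ge hxy ha hb hab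

lemma strictConvexOn_rpow_mul_exp {k l : ℝ} (hk : k < 0) (hl : l ≠ 0) :
    StrictConvexOn ℝ {w : ℝ × ℝ | 0 < w.1} fun w ↦ w.1 ^ k * Real.exp (l * w.2) := by
  have hlog : StrictConvexOn ℝ (Ioi 0) fun v ↦ -k * -Real.log v :=
    strictConvexOn_const_smul (neg_pos.2 hk) strictConcaveOn_log_Ioi.neg
  have hexponent : ConvexOn ℝ {w : ℝ × ℝ | 0 < w.1} fun w ↦ -k * -Real.log w.1 + l * w.2 :=
    (hlog.convexOn.comp_linearMap (.fst ℝ ℝ ℝ)).add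
      ((l • LinearMap.snd ℝ ℝ ℝ).convexOn (hlog.1.linear_preimage (.fst ℝ ℝ ℝ)))
  have hexp := strictConvexOn_comp_of_lt_of_eq strictConvexOn_exp
    (Real.exp_strictMono.strictMonoOn univ) hexponent (mapsTo_univ _ _) ?_
  · refine hexp.congr fun w (hw : 0 < w.1) ↦ ?_
    simp only [Real.rpow_def_of_pos hw, ← Real.exp_add]
    ring_nf
  · intro x hx y hy hxy heq a b ha hb hab
    have hfst : x.1 ≠ y.1 := by
      intro h
      simp only [h, add_right_inj] at heq
      exact hxy (Prod.ext h (mul_left_cancel₀ hl heq))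
    have hlt := hlog.2 hx hy hfst ha hb hab
    simp only [smul_eq_mul, Prod.fst_add, Prod.snd_add, Prod.smul_fst, Prod.smul_snd] at hlt ⊢
    linarith

variable {E : Type*} [NormedAddCommGroup E]

/-- The energy per unit mass of a perfect gas with specific heat `c` and adiabatic exponent `γ`,
at specific volume `v`, velocity `u` and specific entropy `s`, where `w = (v, u, s)`. -/
noncomputable def specificEnergy (c γ : ℝ) (w : ℝ × E × ℝ) : ℝ :=
  ‖w.2.1‖ ^ 2 / 2 + c * (w.1 ^ (1 - γ) * Real.exp (c⁻¹ * w.2.2))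

/-- The total energy per unit volume at `p = (ρ, m, S)`, as in `totalEnergyFn` but for momenta in
any normed space and with the specific heat `c` independent of `γ`. -/
noncomputable def totalEnergy (c γ : ℝ) (p : ℝ × E × ℝ) : ℝ :=
  ‖p.2.1‖ ^ 2 / (2 * p.1) + c * p.1 ^ γ * Real.exp (p.2.2 / (c * p.1))

variable [NormedSpace ℝ E]

lemma strictConvexOn_specificEnergy [StrictConvexSpace ℝ E] {c γ : ℝ} (hc : 0 < c) (hγ : 1 < γ) :
    StrictConvexOn ℝ {w : ℝ × E × ℝ | 0 < w.1} (specificEnergy c γ) := by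
  have hkin : StrictConvexOn ℝ univ fun u : E ↦ ‖u‖ ^ 2 / 2 := by
    simpa only [smul_eq_mul, inv_mul_eq_div] using
      strictConvexOn_const_smul (inv_pos.2 (zero_lt_two' ℝ)) (strictConvexOn_norm_sq (E := E))
  have hint := strictConvexOn_const_smul hc
    (strictConvexOn_rpow_mul_exp (sub_neg.2 hγ) (inv_ne_zero hc.ne'))
  let velocity : ℝ × E × ℝ →ₗ[ℝ] E := .fst ℝ E ℝ ∘ₗ .snd ℝ ℝ (E × ℝ)
  let thermal : ℝ × E × ℝ →ₗ[ℝ] ℝ × ℝ := .prodMap .id (.snd ℝ E ℝ)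
  have hinj : Function.Injective (velocity.prod thermal) := by
    rintro ⟨v, u, s⟩ ⟨v', u', s'⟩ h
    simp_all [velocity, thermal]
  exact (strictConvexOn_comp_add_comp hkin hint hinj).subset (fun w hw ↦ ⟨mem_univ _, hw⟩)
    (convex_halfSpace_gt (LinearMap.fst ℝ ℝ (E × ℝ)).isLinear 0)

lemma totalEnergy_eq_smul_specificEnergy (c γ : ℝ) {p : ℝ × E × ℝ} (hp : 0 < p.1) :
    totalEnergy c γ p = p.1 • specificEnergy c γ (specificState p) := by
  obtain ⟨r, m, S⟩ := p
  replace hp : 0 < r := hp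
  have hnorm : ‖r⁻¹ • m‖ ^ 2 = ‖m‖ ^ 2 / r ^ 2 := by
    rw [norm_smul, mul_pow, norm_inv, inv_pow, Real.norm_of_nonneg hp.le, inv_mul_eq_div]
  have hpow : r⁻¹ ^ (1 - γ) = r ^ γ / r := by
    rw [Real.inv_rpow hp.le, ← Real.rpow_neg hp.le, neg_sub, Real.rpow_sub_one hp.ne']
  have hentropy : c⁻¹ * (r⁻¹ * S) = S / (c * r) := by
    rw [← mul_assoc, ← mul_inv, inv_mul_eq_div]
  simp only [totalEnergy, specificEnergy, specificState, Prod.smul_mk, smul_eq_mul, mul_one,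
    hnorm, hpow, hentropy]
  field_simp

theorem totalEnergyFn_strictConvexOn_general [StrictConvexSpace ℝ E] {c γ : ℝ} (hc : 0 < c)
    (hγ : 1 < γ) : StrictConvexOn ℝ {p : ℝ × E × ℝ | 0 < p.1} (totalEnergy c γ) := by
  have hconvex := strictConvexOn_smul_comp_specificState
    (strictConvexOn_specificEnergy (E := E) hc hγ)
  have hdomain : {p : ℝ × E × ℝ | 0 < p.1 ∧ specificState p ∈ {w | 0 < w.1}} = {p | 0 < p.1} := by
    ext p
    simp [specificState]
  rw [hdomain] at hconvex
  exact hconvex.congr fun p hp ↦ (totalEnergy_eq_smul_specificEnergy c γ hp).symm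

end Energy

/-- the total energy is strictly convex on the interior of its domain
`{ρ > 0}`. -/
theorem totalEnergyFn_strictConvexOn (d : ℕ) (hd : 1 ≤ d) (γ : ℝ) (hγ : 1 < γ)
    (x y : ℝ × EuclideanSpace ℝ (Fin d) × ℝ) (hx : 0 < x.1) (hy : 0 < y.1) (hxy : x ≠ y)
    (a : ℝ) (ha0 : 0 < a) (ha1 : a < 1) :
    totalEnergyFn d γ (a • x + (1 - a) • y) <
      a * totalEnergyFn d γ x + (1 - a) * totalEnergyFn d γ y := by
  exact (totalEnergyFn_strictConvexOn_general (one_div_pos.2 (sub_pos.2 hγ)) hγ).2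
    hx hy hxy ha0 (sub_pos.2 ha1) (add_sub_cancel a 1)
end
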